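/- arXiv:1804.02332 — 7 statements merged into one kernel-verified Lean document; each statement's English description precedes it below -/
import Mathlib

section
/- Let N ≥ 1, let a_1,…,a_N ≥ 0, let b_1,…,b_N > 0 be pairwise distinct, and set a = Σ_{j=1}^N a_j. Let p : [0,∞) → ℝ^{N+1} be differentiable with p'(t) = A* p(t) for all t ≥ 0 and p(0) = (u_0, 0, …, 0), where A* is the loop Markov generator matrix. Then the first component u(t) := p_0(t) satisfies the memory equation u'(t) = −a·u(t) + ∫_0^t K(t−s)·u(s) ds for all t ≥ 0, with u(0) = u_0. -/
open MeasureTheory Finset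

/-!
Started at `i`, the process walks `i → i - 1 → ⋯ → 1 → 0` at rates `b i, …, b 1`, so its hitting
time of `0` has a hypoexponential density `kᵢ`. The row vector `k = (0, k₁, …, k_N)` solves the
backward equation `k' = k A* - K e₀ᵀ`, in which `K = ∑ⱼ aⱼ kⱼ` comes from column `0` of `A*`. Hence
`d/ds (k(t - s) ⬝ p(s)) = K(t - s) p₀(s)`, and integrating over `[0, t]` expresses `k(0) ⬝ p(t)`
through the history of `p₀`. As row `0` of `A*` is `-a e₀ᵀ + k(0)`, this is the memory equation.
The value `k(0)` is found by observing that `ψᵢ` is the value at `0` of a Lagrange basis polynomial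
with nodes `b`.
-/

open scoped Matrix

section Duhamel

variable {ι 𝔸 : Type*} [Fintype ι] [NormedRing 𝔸]

theorem hasDerivAt_dotProduct {𝕜 : Type*} [NontriviallyNormedField 𝕜] [NormedAlgebra 𝕜 𝔸]
    {v w : 𝕜 → ι → 𝔸} {v' w' : ι → 𝔸} {t : 𝕜}
    (hv : HasDerivAt v v' t) (hw : HasDerivAt w w' t) :
    HasDerivAt (fun s ↦ v s ⬝ᵥ w s) (v' ⬝ᵥ w t + v t ⬝ᵥ w') t := by
  simp only [dotProduct, ← sum_add_distrib]
  exact HasDerivAt.fun_sum fun i _ ↦ (hasDerivAt_pi.1 hv i).mul (hasDerivAt_pi.1 hw i)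

theorem dotProduct_eq_add_integral_of_hasDerivAt [NormedAlgebra ℝ 𝔸] [CompleteSpace 𝔸]
    {A : Matrix ι ι 𝔸} {k w p : ℝ → ι → 𝔸} {t : ℝ} (ht : 0 ≤ t)
    (hk : ∀ s ∈ Set.Icc 0 t, HasDerivAt k (k s ᵥ* A - w s) s)
    (hw : ContinuousOn w (Set.Icc 0 t))
    (hp : ∀ s ∈ Set.Icc 0 t, HasDerivAt p (A *ᵥ p s) s) :
    k 0 ⬝ᵥ p t = k t ⬝ᵥ p 0 + ∫ s in (0 : ℝ)..t, w (t - s) ⬝ᵥ p s := by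
  have reflect_mem : ∀ s ∈ Set.Icc 0 t, t - s ∈ Set.Icc 0 t := fun s hs ↦
    ⟨sub_nonneg.2 hs.2, sub_le_self t hs.1⟩
  have hderiv : ∀ s ∈ Set.uIcc 0 t,
      HasDerivAt (fun s ↦ k (t - s) ⬝ᵥ p s) (w (t - s) ⬝ᵥ p s) s := by
    intro s hs
    rw [Set.uIcc_of_le ht] at hs
    convert hasDerivAt_dotProduct ((hk _ (reflect_mem s hs)).comp_const_sub t s) (hp s hs) using 1
    rw [Matrix.dotProduct_mulVec, ← add_dotProduct, neg_sub, sub_add_cancel]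
  have hint : IntervalIntegrable (fun s ↦ w (t - s) ⬝ᵥ p s) volume 0 t := by
    refine ContinuousOn.intervalIntegrable ?_
    rw [Set.uIcc_of_le ht]
    have hw' : ContinuousOn (fun s ↦ w (t - s)) (Set.Icc 0 t) :=
      hw.comp (by fun_prop) reflect_mem
    have hp' : ContinuousOn p (Set.Icc 0 t) := HasDerivAt.continuousOn hp
    exact continuousOn_finsetSum univ fun i _ ↦
      (continuousOn_pi.1 hw' i).mul (continuousOn_pi.1 hp' i)
  rw [intervalIntegral.integral_eq_sub_of_hasDerivAt hderiv hint, sub_self, sub_zero,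
    add_sub_cancel]

end Duhamel

section Hypoexponential

variable {ι F : Type*} [DecidableEq ι] [Field F]

theorem eval_zero_lagrangeBasis (s : Finset ι) (v : ι → F) (i : ι) :
    (Lagrange.basis s v i).eval 0 = ∏ k ∈ s.erase i, v k / (v k - v i) := by
  rw [Lagrange.basis, Polynomial.eval_prod]
  refine prod_congr rfl fun k _ ↦ ?_
  rw [Lagrange.basisDivisor, Polynomial.eval_mul, Polynomial.eval_C, Polynomial.eval_sub,
    Polynomial.eval_X, Polynomial.eval_C, zero_sub, ← neg_sub (v k), inv_neg, neg_mul_neg,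
    mul_comm, div_eq_mul_inv]

-- Interpolating the polynomial `X`, which vanishes at `0`.
theorem sum_mul_prod_div_sub_eq_zero {s : Finset ι} {v : ι → F} (hv : Set.InjOn v s)
    (hs : 2 ≤ #s) : ∑ i ∈ s, v i * ∏ k ∈ s.erase i, v k / (v k - v i) = 0 := by
  have hdeg : (Polynomial.X : Polynomial F).degree < #s := by
    rw [Polynomial.degree_X]
    exact_mod_cast hs
  have hX := congrArg (Polynomial.eval 0) (Lagrange.eq_interpolate hv hdeg)
  simpa [Lagrange.interpolate_apply, Polynomial.eval_finsetSum, eval_zero_lagrangeBasis]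
    using hX.symm

theorem sub_mul_prod_erase_insert {s : Finset ι} {v : ι → F} {i m : ι} (hm : m ∉ s)
    (hi : i ∈ s) (hne : v i ≠ v m) :
    (v m - v i) * ∏ k ∈ (insert m s).erase i, v k / (v k - v i) =
      v m * ∏ k ∈ s.erase i, v k / (v k - v i) := by
  have him : m ≠ i := (ne_of_mem_of_not_mem hi hm).symm
  rw [erase_insert_of_ne him, prod_insert fun h ↦ hm (mem_of_mem_erase h), ← mul_assoc,
    mul_div_cancel₀ _ (sub_ne_zero.2 hne.symm)]

/-- The density at `t ≥ 0` of a sum of independent exponential variables with pairwise distinct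
rates `b i`, `i ∈ s`, given by the usual partial fraction formula. It is `0` for `s = ∅`, where the
sum is a point mass and has no density. -/
noncomputable def hypoexponentialDensity (s : Finset ι) (b : ι → ℝ) (t : ℝ) : ℝ :=
  ∑ i ∈ s, b i * (∏ k ∈ s.erase i, b k / (b k - b i)) * Real.exp (-(b i) * t)

@[fun_prop]
theorem continuous_hypoexponentialDensity (s : Finset ι) (b : ι → ℝ) :
    Continuous (hypoexponentialDensity s b) := by
  unfold hypoexponentialDensity
  fun_prop

theorem hypoexponentialDensity_empty (b : ι → ℝ) (t : ℝ) :
    hypoexponentialDensity ∅ b t = 0 :=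
  sum_empty

theorem hypoexponentialDensity_singleton_zero (b : ι → ℝ) (i : ι) :
    hypoexponentialDensity {i} b 0 = b i := by
  simp [hypoexponentialDensity]

theorem hypoexponentialDensity_zero_of_two_le_card {s : Finset ι} {b : ι → ℝ}
    (hb : Set.InjOn b s) (hs : 2 ≤ #s) : hypoexponentialDensity s b 0 = 0 := by
  simpa only [hypoexponentialDensity, mul_zero, Real.exp_zero, mul_one] using
    sum_mul_prod_div_sub_eq_zero hb hs

theorem hasDerivAt_hypoexponentialDensity_insert {s : Finset ι} {b : ι → ℝ} {m : ι}
    (hm : m ∉ s) (hb : ∀ i ∈ s, b i ≠ b m) (t : ℝ) :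
    HasDerivAt (hypoexponentialDensity (insert m s) b)
      (b m * (hypoexponentialDensity s b t - hypoexponentialDensity (insert m s) b t)) t := by
  set c : ι → ℝ := fun i ↦ ∏ k ∈ (insert m s).erase i, b k / (b k - b i)
  have hexp (i : ι) :
      HasDerivAt (fun t ↦ Real.exp (-(b i) * t)) (Real.exp (-(b i) * t) * -(b i)) t := by
    simpa using ((hasDerivAt_id t).const_mul (-(b i))).exp
  have hterm : ∀ i ∈ s, b m * (b i * (∏ k ∈ s.erase i, b k / (b k - b i)) *
      Real.exp (-(b i) * t)) = (b m - b i) * (b i * c i * Real.exp (-(b i) * t)) := by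
    intro i hi
    linear_combination
      -(b i * Real.exp (-(b i) * t)) * sub_mul_prod_erase_insert hm hi (hb i hi)
  have hderiv := HasDerivAt.fun_sum fun i (_ : i ∈ insert m s) ↦ (hexp i).const_mul (b i * c i)
  refine hderiv.congr_deriv ?_
  simp only [hypoexponentialDensity]
  rw [mul_sub, mul_sum, sum_congr rfl hterm, sum_insert hm, sum_insert hm, mul_add, mul_sum,
    sub_add_eq_sub_sub_swap, ← sum_sub_distrib, sub_eq_neg_add]
  congr 1
  · ring
  · exact sum_congr rfl fun i _ ↦ by ring

end Hypoexponential

section LoopGenerator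

variable {R : Type*} [Ring R] (N : ℕ) (a b : ℕ → R)

/-- The generator `A*` of the loop Markov process, acting on column vectors: state `0` is left
towards `j` at rate `a j`, and state `j ≥ 1` is left towards `j - 1` at rate `b j`. -/
def loopGenerator : Matrix (Fin (N + 1)) (Fin (N + 1)) R :=
  Matrix.of fun i j : Fin (N + 1) =>
    if (i : ℕ) = 0 ∧ (j : ℕ) = 0 then -(∑ k ∈ Finset.Icc 1 N, a k)
    else if (i : ℕ) = 0 ∧ (j : ℕ) = 1 then b 1
    else if (j : ℕ) = 0 then a (i : ℕ)
    else if (i : ℕ) = (j : ℕ) then -(b (i : ℕ))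
    else if (j : ℕ) = (i : ℕ) + 1 then b (j : ℕ)
    else 0

theorem col_loopGenerator_zero :
    (loopGenerator N a b).col 0 =
      Fin.cons (α := fun _ ↦ R) (-∑ j ∈ Icc 1 N, a j) fun j : Fin N ↦ a (j + 1) := by
  ext i
  cases i using Fin.cases <;> simp [loopGenerator]

theorem col_loopGenerator_succ (j : Fin N) :
    (loopGenerator N a b).col j.succ =
      Pi.single j.castSucc (b (j + 1)) - Pi.single j.succ (b (j + 1)) := by
  ext i
  simp only [Matrix.col_apply, loopGenerator, Matrix.of_apply, Fin.val_succ, Pi.sub_apply,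
    Pi.single_apply, Fin.ext_iff, Fin.val_castSucc]
  grind

theorem vecMul_loopGenerator_zero (x : Fin (N + 1) → R) :
    (x ᵥ* loopGenerator N a b) 0 =
      x 0 * (-∑ j ∈ Icc 1 N, a j) + ∑ j : Fin N, x j.succ * a (j + 1) := by
  change x ⬝ᵥ (loopGenerator N a b).col 0 = _
  rw [col_loopGenerator_zero, dotProduct, Fin.sum_univ_succ]
  simp only [Fin.cons_zero, Fin.cons_succ]

theorem vecMul_loopGenerator_succ (x : Fin (N + 1) → R) (j : Fin N) :
    (x ᵥ* loopGenerator N a b) j.succ = (x j.castSucc - x j.succ) * b (j + 1) := by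
  change x ⬝ᵥ (loopGenerator N a b).col j.succ = _
  rw [col_loopGenerator_succ, dotProduct_sub, dotProduct_single, dotProduct_single, sub_mul]

theorem loopGenerator_zero :
    loopGenerator N a b 0 =
      Pi.single 0 (-∑ j ∈ Icc 1 N, a j) +
        fun i : Fin (N + 1) ↦ if (i : ℕ) = 1 then b 1 else 0 := by
  ext i
  simp only [loopGenerator, Matrix.of_apply, Pi.add_apply, Pi.single_apply, Fin.ext_iff]
  grind

end LoopGenerator

section MemoryEquation

variable {N : ℕ} {b : ℕ → ℝ}

/-- The row vector of densities at time `t` of the hitting time of state `0` by the loop Markov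
process started at `i`; the entries with `i ≥ 1` are the kernels `Kᵢ`. The hitting time from
`i = 0` is `0`, and the entry is `0` by convention. -/
noncomputable def hittingDensity (N : ℕ) (b : ℕ → ℝ) (t : ℝ) : Fin (N + 1) → ℝ :=
  fun i ↦ hypoexponentialDensity (Icc 1 (i : ℕ)) b t

/-- The kernel `K = ∑ⱼ aⱼ Kⱼ` of the memory equation: the densities of the hitting time of state `0`
from `j`, weighted by the rates `aⱼ` of leaving `0` towards `j`. -/
noncomputable def memoryKernel (N : ℕ) (a b : ℕ → ℝ) (t : ℝ) : ℝ :=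
  ∑ j ∈ Icc 1 N, a j * hypoexponentialDensity (Icc 1 j) b t

@[fun_prop]
theorem continuous_memoryKernel (N : ℕ) (a b : ℕ → ℝ) : Continuous (memoryKernel N a b) := by
  unfold memoryKernel
  fun_prop

theorem hittingDensity_apply_zero (N : ℕ) (b : ℕ → ℝ) (t : ℝ) : hittingDensity N b t 0 = 0 :=
  hypoexponentialDensity_empty b t

theorem hittingDensity_zero (hb : Set.InjOn b (Icc 1 N)) :
    hittingDensity N b 0 = fun i : Fin (N + 1) ↦ if (i : ℕ) = 1 then b 1 else 0 := by
  ext ⟨i, hi⟩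
  match i with
  | 0 => exact hittingDensity_apply_zero N b 0
  | 1 => simpa [hittingDensity] using hypoexponentialDensity_singleton_zero b 1
  | i + 2 =>
    have hsub : Icc 1 (i + 2) ⊆ Icc 1 N := Icc_subset_Icc_right (Nat.lt_succ_iff.1 hi)
    simpa [hittingDensity] using
      hypoexponentialDensity_zero_of_two_le_card (hb.mono (coe_subset.2 hsub)) (by simp)

theorem vecMul_hittingDensity_zero (a : ℕ → ℝ) (t : ℝ) :
    (hittingDensity N b t ᵥ* loopGenerator N a b) 0 = memoryKernel N a b t := by
  have hkernel : memoryKernel N a b t =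
      ∑ j : Fin N, a (j + 1) * hypoexponentialDensity (Icc 1 (j + 1 : ℕ)) b t := by
    rw [memoryKernel, Fin.sum_univ_eq_sum_range
      (fun j ↦ a (j + 1) * hypoexponentialDensity (Icc 1 (j + 1)) b t), range_eq_Ico,
      sum_Ico_add' (fun j ↦ a j * hypoexponentialDensity (Icc 1 j) b t), zero_add,
      Ico_add_one_right_eq_Icc]
  rw [vecMul_loopGenerator_zero, hittingDensity_apply_zero, zero_mul, zero_add, hkernel]
  exact sum_congr rfl fun j _ ↦ mul_comm _ _

theorem hasDerivAt_hittingDensity_succ (hb : Set.InjOn b (Icc 1 N)) (t : ℝ) (j : Fin N) :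
    HasDerivAt (fun s ↦ hittingDensity N b s j.succ)
      (b (j + 1) * (hittingDensity N b t j.castSucc - hittingDensity N b t j.succ)) t := by
  have hinsert : Icc 1 (j + 1 : ℕ) = insert (j + 1 : ℕ) (Icc 1 (j : ℕ)) :=
    (insert_Icc_right_eq_Icc_add_one (Nat.le_add_left 1 j)).symm
  have hne : ∀ i ∈ Icc 1 (j : ℕ), b i ≠ b (j + 1) := by
    intro i hi
    rw [mem_Icc] at hi
    refine hb.ne (mem_coe.2 (mem_Icc.2 ?_)) (mem_coe.2 (mem_Icc.2 ?_)) ?_ <;> omega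
  simpa only [hittingDensity, Fin.val_succ, Fin.val_castSucc, hinsert] using
    hasDerivAt_hypoexponentialDensity_insert (by simp) hne t

theorem hasDerivAt_hittingDensity (a : ℕ → ℝ) (hb : Set.InjOn b (Icc 1 N)) (t : ℝ) :
    HasDerivAt (hittingDensity N b)
      (hittingDensity N b t ᵥ* loopGenerator N a b - Pi.single 0 (memoryKernel N a b t)) t := by
  refine hasDerivAt_pi.2 fun i ↦ ?_
  cases i using Fin.cases with
  | zero =>
    simp only [hittingDensity_apply_zero, Pi.sub_apply, vecMul_hittingDensity_zero,
      Pi.single_eq_same, sub_self]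
    exact hasDerivAt_const t 0
  | succ j =>
    rw [Pi.sub_apply, vecMul_loopGenerator_succ, Pi.single_eq_of_ne j.succ_ne_zero, sub_zero,
      mul_comm]
    exact hasDerivAt_hittingDensity_succ hb t j

theorem stmt_0_general {a : ℕ → ℝ} (hb : Set.InjOn b (Icc 1 N)) {p : ℝ → Fin (N + 1) → ℝ}
    (hp : ∀ t : ℝ, 0 ≤ t → HasDerivAt p (loopGenerator N a b *ᵥ p t) t) {t : ℝ} (ht : 0 ≤ t) :
    HasDerivAt (fun s ↦ p s 0)
      (-(∑ j ∈ Icc 1 N, a j) * p t 0 +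
        (hittingDensity N b t ⬝ᵥ p 0 + ∫ s in (0 : ℝ)..t, memoryKernel N a b (t - s) * p s 0))
      t := by
  have hcont : Continuous fun s ↦ (Pi.single 0 (memoryKernel N a b s) : Fin (N + 1) → ℝ) :=
    (continuous_single 0).comp (continuous_memoryKernel N a b)
  have hduhamel := dotProduct_eq_add_integral_of_hasDerivAt ht
    (fun s _ ↦ hasDerivAt_hittingDensity a hb s) hcont.continuousOn (fun s hs ↦ hp s hs.1)
  simp only [single_dotProduct] at hduhamel
  have hrow : (loopGenerator N a b *ᵥ p t) 0 =
      -(∑ j ∈ Icc 1 N, a j) * p t 0 + hittingDensity N b 0 ⬝ᵥ p t := by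
    rw [Matrix.mulVec, loopGenerator_zero, ← hittingDensity_zero hb, add_dotProduct,
      single_dotProduct]
  rw [← hduhamel, ← hrow]
  exact hasDerivAt_pi.1 (hp t ht) 0

end MemoryEquation

/-- **From Markov to Memory.**  The first component of the loop Markov process solves the
memory equation with kernel `K(t) = ∑ⱼ aⱼ Kⱼ(t)`, `Kⱼ(t) = ∑ᵢ bᵢ ψᵢʲ e^{−bᵢ t}`. -/
theorem stmt_0 (N : ℕ) (hN : 1 ≤ N) (a b : ℕ → ℝ) (u₀ : ℝ)
    (ha : ∀ j ∈ Finset.Icc 1 N, 0 ≤ a j)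
    (hb : ∀ j ∈ Finset.Icc 1 N, 0 < b j)
    (hbd : ∀ i ∈ Finset.Icc 1 N, ∀ j ∈ Finset.Icc 1 N, i ≠ j → b i ≠ b j)
    (Astar : Matrix (Fin (N + 1)) (Fin (N + 1)) ℝ)
    (hA : Astar = Matrix.of fun i j : Fin (N + 1) =>
      if (i : ℕ) = 0 ∧ (j : ℕ) = 0 then -(∑ k ∈ Finset.Icc 1 N, a k)
      else if (i : ℕ) = 0 ∧ (j : ℕ) = 1 then b 1
      else if (j : ℕ) = 0 then a (i : ℕ)
      else if (i : ℕ) = (j : ℕ) then -(b (i : ℕ))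
      else if (j : ℕ) = (i : ℕ) + 1 then b (j : ℕ)
      else 0)
    (p : ℝ → Fin (N + 1) → ℝ)
    (hp : ∀ t : ℝ, 0 ≤ t → HasDerivAt p (Astar.mulVec (p t)) t)
    (hp0 : p 0 = fun i : Fin (N + 1) => if (i : ℕ) = 0 then u₀ else 0)
    (K : ℝ → ℝ)
    (hK : K = fun t => ∑ j ∈ Finset.Icc 1 N, a j *
      ∑ i ∈ Finset.Icc 1 j, b i * (∏ k ∈ (Finset.Icc 1 j).erase i, b k / (b k - b i)) *
        Real.exp (-(b i) * t)) :
    p 0 0 = u₀ ∧ ∀ t : ℝ, 0 ≤ t →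
      HasDerivAt (fun s => p s 0)
        (-(∑ k ∈ Finset.Icc 1 N, a k) * p t 0 + ∫ s in (0:ℝ)..t, K (t - s) * p s 0) t := by
  subst hA hK
  have hinj : Set.InjOn b (Icc 1 N) := fun i hi j hj ↦ not_imp_not.1 (hbd i hi j hj)
  have hinit (t : ℝ) : hittingDensity N b t ⬝ᵥ p 0 = 0 := by
    simp [dotProduct, hp0, hittingDensity_apply_zero]
  refine ⟨by simp [hp0], fun t ht ↦ ?_⟩
  have hmemory := stmt_0_general hinj hp ht
  rw [hinit, zero_add] at hmemory
  exact hmemory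
end

section
/- Let j ≥ 1 and let b_1,…,b_j > 0 be pairwise distinct. Then the kernel K_j(t) = Σ_{i=1}^j b_i ψ_i^j e^{−b_i t} satisfies K_j(t) ≥ 0 for all t ≥ 0, even though the coefficients b_i ψ_i^j may be negative. -/
open Finset

/-!
The kernel is a divided difference. Take the nodes `-bᵢ` and the function `f x = exp (t x)`: then
`K_j(t) = (∏ bᵢ) · f[-b₁, …, -b_j]`. By the mean value theorem for divided differences,
`f[-b₁, …, -b_j] = f^(j-1)(ξ) / (j-1)!` for some `ξ`, and every derivative of `f` is nonnegative
because `t ≥ 0`. The mean value theorem itself is iterated Rolle applied to `f` minus its Lagrange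
interpolant.
-/

section IteratedRolle

variable {I : Set ℝ} {f : ℝ → ℝ}

theorem exists_mem_Ioo_derivWithin_eq_zero (hI : I.OrdConnected) (hf : ContinuousOn f I)
    {x y : ℝ} (hx : x ∈ I) (hy : y ∈ I) (hxy : x < y) (hfxy : f x = f y) :
    ∃ c ∈ Set.Ioo x y, derivWithin f I c = 0 := by
  obtain ⟨c, hc, hfc⟩ := exists_deriv_eq_zero hxy (hf.mono (hI.out hx hy)) hfxy
  have hIc : I ∈ nhds c := Filter.mem_of_superset (Icc_mem_nhds hc.1 hc.2) (hI.out hx hy)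
  exact ⟨c, hc, (derivWithin_of_mem_nhds hIc).trans hfc⟩

theorem exists_finset_derivWithin_eq_zero_card_le (hI : I.OrdConnected) (hf : ContinuousOn f I)
    {Z : Finset ℝ} (hZI : ↑Z ⊆ I) (hZ : ∀ z ∈ Z, f z = 0) :
    ∃ W : Finset ℝ, ↑W ⊆ I ∧ (∀ w ∈ W, derivWithin f I w = 0) ∧ #Z ≤ #W + 1 := by
  have rolle (x y : ℝ) (hx : x ∈ Z) (hy : y ∈ Z) (hxy : x < y) :
      ∃ c ∈ Set.Ioo x y, derivWithin f I c = 0 :=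
    exists_mem_Ioo_derivWithin_eq_zero hI hf (hZI hx) (hZI hy) hxy ((hZ x hx).trans (hZ y hy).symm)
  choose! c hc hfc using rolle
  let pairs : Finset (ℝ × ℝ) := {p ∈ Z ×ˢ Z | p.1 < p.2}
  have mem_pairs {p : ℝ × ℝ} : p ∈ pairs ↔ (p.1 ∈ Z ∧ p.2 ∈ Z) ∧ p.1 < p.2 := by
    simp only [pairs, mem_filter, mem_product]
  refine ⟨pairs.image fun p ↦ c p.1 p.2, ?_, ?_, card_le_of_interleaved ?_⟩
  · intro w hw
    obtain ⟨p, hp, rfl⟩ := mem_image.1 hw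
    obtain ⟨⟨hx, hy⟩, hxy⟩ := mem_pairs.1 hp
    exact hI.out (hZI hx) (hZI hy) (Set.Ioo_subset_Icc_self (hc _ _ hx hy hxy))
  · refine forall_mem_image.2 fun p hp ↦ ?_
    obtain ⟨⟨hx, hy⟩, hxy⟩ := mem_pairs.1 hp
    exact hfc _ _ hx hy hxy
  · intro x hx y hy hxy _
    have hp : (x, y) ∈ pairs := mem_pairs.2 ⟨⟨hx, hy⟩, hxy⟩
    exact ⟨c x y, mem_image.2 ⟨(x, y), hp, rfl⟩, hc x y hx hy hxy⟩

theorem exists_iteratedDerivWithin_eq_zero (hI : I.OrdConnected) (hI' : UniqueDiffOn ℝ I) {n : ℕ}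
    (hf : ContDiffOn ℝ n f I) {Z : Finset ℝ} (hZI : ↑Z ⊆ I) (hZ : ∀ z ∈ Z, f z = 0)
    (hn : n < #Z) : ∃ ξ ∈ I, iteratedDerivWithin n f I ξ = 0 := by
  induction n generalizing f Z with
  | zero =>
    obtain ⟨z, hz⟩ := card_pos.1 hn
    exact ⟨z, hZI hz, by rw [iteratedDerivWithin_zero, hZ z hz]⟩
  | succ n ih =>
    obtain ⟨W, hWI, hW, hZW⟩ := exists_finset_derivWithin_eq_zero_card_le hI hf.continuousOn hZI hZ
    have hf' : ContDiffOn ℝ n (derivWithin f I) I := hf.derivWithin hI' (by norm_cast)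
    simpa only [iteratedDerivWithin_succ'] using ih hf' hWI hW (by lia)

end IteratedRolle

theorem iteratedDerivWithin_polynomial_eval {𝕜 : Type*} [NontriviallyNormedField 𝕜] {S : Set 𝕜}
    (hS : UniqueDiffOn 𝕜 S) (P : Polynomial 𝕜) (n : ℕ) {x : 𝕜} (hx : x ∈ S) :
    iteratedDerivWithin n (fun y ↦ P.eval y) S x = (Polynomial.derivative^[n] P).eval x := by
  induction n generalizing P with
  | zero => rw [iteratedDerivWithin_zero, Function.iterate_zero_apply]
  | succ n ih =>
    have hP : S.EqOn (derivWithin (fun y ↦ P.eval y) S) fun y ↦ P.derivative.eval y :=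
      fun y hy ↦ P.derivWithin (hS y hy)
    rw [iteratedDerivWithin_succ', iteratedDerivWithin_congr hP hx, ih,
      Function.iterate_succ_apply]

section DividedDifference

variable {ι : Type*} [DecidableEq ι]

/-- The divided difference of `f` at the nodes `v i`, `i ∈ s`, written as the symmetric sum
`∑ i ∈ s, f (v i) / ∏ k ≠ i, (v i - v k)`. It is meaningful only for pairwise distinct nodes. -/
def dividedDifference {F : Type*} [Field F] (s : Finset ι) (v : ι → F) (f : F → F) : F :=
  ∑ i ∈ s, Lagrange.nodalWeight s v i * f (v i)

section Field

variable {F : Type*} [Field F] {s : Finset ι}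

theorem iterate_derivative_interpolate_eq_C_dividedDifference {v : ι → F} (hv : Set.InjOn v s)
    {n : ℕ} (hn : #s = n + 1) (f : F → F) :
    Polynomial.derivative^[n] (Lagrange.interpolate s v fun i ↦ f (v i)) =
      Polynomial.C (n.factorial * dividedDifference s v f) := by
  rw [Lagrange.iterate_derivative_interpolate _ hv (by lia), hn, Nat.sub_self]
  simp [dividedDifference, Lagrange.nodalWeight, div_eq_mul_inv, mul_comm]

theorem sum_mul_prod_div_sub_mul_eq_prod_mul_dividedDifference (s : Finset ι) (b : ι → F)
    (f : F → F) :
    ∑ i ∈ s, b i * (∏ k ∈ s.erase i, b k / (b k - b i)) * f (-b i) =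
      (∏ i ∈ s, b i) * dividedDifference s (-b) f := by
  rw [dividedDifference, mul_sum]
  refine sum_congr rfl fun i hi ↦ ?_
  have hweight : Lagrange.nodalWeight s (-b) i = ∏ k ∈ s.erase i, (b k - b i)⁻¹ :=
    prod_congr rfl fun k _ ↦ by rw [Pi.neg_apply, Pi.neg_apply, neg_sub_neg]
  simp only [hweight, div_eq_mul_inv, prod_mul_distrib, Pi.neg_apply, ← mul_prod_erase s b hi,
    mul_assoc]

end Field

variable {s : Finset ι} {v : ι → ℝ} {I : Set ℝ} {f : ℝ → ℝ} {n : ℕ}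

theorem exists_dividedDifference_eq_iteratedDerivWithin_div_factorial (hI : I.OrdConnected)
    (hI' : UniqueDiffOn ℝ I) (hv : Set.InjOn v s) (hvI : Set.MapsTo v s I) (hn : #s = n + 1)
    (hf : ContDiffOn ℝ n f I) :
    ∃ ξ ∈ I, dividedDifference s v f = iteratedDerivWithin n f I ξ / n.factorial := by
  let P := Lagrange.interpolate s v fun i ↦ f (v i)
  have hP : ContDiffOn ℝ n (fun x ↦ P.eval x) I := (P.contDiff_aeval n).contDiffOn
  have hcard : n < #(s.image v) := by rw [card_image_of_injOn hv]; lia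
  have hzero : ∀ z ∈ s.image v, f z - P.eval z = 0 := forall_mem_image.2 fun i hi ↦
    sub_eq_zero.2 (Lagrange.eval_interpolate_at_node (fun i ↦ f (v i)) hv hi).symm
  obtain ⟨ξ, hξ, hξ0⟩ : ∃ ξ ∈ I, iteratedDerivWithin n (f - fun x ↦ P.eval x) I ξ = 0 :=
    exists_iteratedDerivWithin_eq_zero hI hI' (hf.sub hP)
      (coe_image.trans_subset hvI.image_subset) hzero hcard
  have hfξ : iteratedDerivWithin n f I ξ = n.factorial * dividedDifference s v f := by
    rwa [iteratedDerivWithin_sub hξ hI' (hf ξ hξ) (hP ξ hξ),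
      iteratedDerivWithin_polynomial_eval hI' P n hξ,
      iterate_derivative_interpolate_eq_C_dividedDifference hv hn, Polynomial.eval_C,
      sub_eq_zero] at hξ0
  exact ⟨ξ, hξ, by rw [hfξ, mul_div_cancel_left₀ _ (Nat.cast_ne_zero.2 n.factorial_ne_zero)]⟩

theorem dividedDifference_nonneg (hI : I.OrdConnected) (hI' : UniqueDiffOn ℝ I)
    (hv : Set.InjOn v s) (hvI : Set.MapsTo v s I) (hn : #s = n + 1) (hf : ContDiffOn ℝ n f I)
    (hf' : ∀ x ∈ I, 0 ≤ iteratedDerivWithin n f I x) : 0 ≤ dividedDifference s v f := by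
  obtain ⟨ξ, hξ, h⟩ :=
    exists_dividedDifference_eq_iteratedDerivWithin_div_factorial hI hI' hv hvI hn hf
  exact h ▸ div_nonneg (hf' ξ hξ) n.factorial.cast_nonneg

theorem dividedDifference_exp_const_mul_nonneg (hv : Set.InjOn v s) {t : ℝ} (ht : 0 ≤ t) :
    0 ≤ dividedDifference s v fun x ↦ Real.exp (t * x) := by
  rcases s.eq_empty_or_nonempty with rfl | hs
  · exact le_rfl
  obtain ⟨n, hn⟩ := Nat.exists_eq_add_one.2 hs.card_pos
  refine dividedDifference_nonneg Set.ordConnected_univ uniqueDiffOn_univ hv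
    (Set.mapsTo_univ v s) hn (by fun_prop) fun x _ ↦ ?_
  rw [iteratedDerivWithin_univ, iteratedDeriv_exp_const_mul]
  positivity

end DividedDifference

theorem stmt_1_general {ι : Type*} [DecidableEq ι] (s : Finset ι) (b : ι → ℝ)
    (hb : 0 ≤ ∏ i ∈ s, b i) (hbd : Set.InjOn b s) (t : ℝ) (ht : 0 ≤ t) :
    0 ≤ ∑ i ∈ s, b i * (∏ k ∈ s.erase i, b k / (b k - b i)) * Real.exp (-(b i) * t) := by
  have hnodes : Set.InjOn (-b) s := neg_injective.comp_injOn hbd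
  calc
    0 ≤ (∏ i ∈ s, b i) * dividedDifference s (-b) fun x ↦ Real.exp (t * x) :=
      mul_nonneg hb (dividedDifference_exp_const_mul_nonneg hnodes ht)
    _ = ∑ i ∈ s, b i * (∏ k ∈ s.erase i, b k / (b k - b i)) * Real.exp (-(b i) * t) := by
      simp only [← sum_mul_prod_div_sub_mul_eq_prod_mul_dividedDifference, mul_comm t]

/-- **Positivity of the loop kernels.**  For pairwise distinct positive rates `b₁,…,b_j`, the
kernel `K_j(t) = ∑ᵢ bᵢ ψᵢʲ e^{−bᵢ t}` is nonnegative for `t ≥ 0`. -/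
theorem stmt_1 (j : ℕ) (hj : 1 ≤ j) (b : ℕ → ℝ)
    (hb : ∀ i ∈ Finset.Icc 1 j, 0 < b i)
    (hbd : ∀ i ∈ Finset.Icc 1 j, ∀ k ∈ Finset.Icc 1 j, i ≠ k → b i ≠ b k)
    (t : ℝ) (ht : 0 ≤ t) :
    0 ≤ ∑ i ∈ Finset.Icc 1 j, b i * (∏ k ∈ (Finset.Icc 1 j).erase i, b k / (b k - b i)) *
      Real.exp (-(b i) * t) := by
  exact stmt_1_general (Icc 1 j) b (prod_nonneg fun i hi ↦ (hb i hi).le)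
    (fun i hi k hk ↦ not_imp_not.1 (hbd i hi k hk)) t ht
end

section
/- Let 0 = t_0 < t_1 < t_2 < ⋯ < t_N be real numbers such that the differences t_j − t_{j−1} (1 ≤ j ≤ N) are pairwise distinct, and define b_j = 1/(t_j − t_{j−1}). Then the b_j are positive and pairwise distinct, and the kernels K_j(t) = Σ_{i=1}^j b_i ψ_i^j e^{−b_i t} satisfy: K_j(t) ≥ 0 for all t ≥ 0, ∫_0^∞ K_j(t) dt = 1, and ∫_0^∞ t·K_j(t) dt = t_j for every 1 ≤ j ≤ N. -/
open MeasureTheory Finset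

/-!
The kernel `K_j` is the density of a sum of `j` independent exponential variables with rates
`b_1, …, b_j`, whose mean is `∑ 1 / b_k = ∑ (t_k - t_{k-1}) = t_j`. This can be seen without
probability. The coefficients `ψ_i^j` are the values at `0` of the Lagrange basis polynomials
with nodes `b_i`, so `∑ ψ_i^j p(b_i) = p(0)` whenever `deg p < j`; taking `p = 1` gives the total
mass and `p = X` gives `K_j(0) = 0` for `j ≥ 2`. Adjoining a rate `a` turns a kernel `K` into a
solution `L` of `L' = a (K - L)`, so `exp(a x) L(x)` is nondecreasing as long as `K ≥ 0`, and
nonnegativity follows by induction on the number of rates.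
-/

section Weights

variable {ι F : Type*} [DecidableEq ι] [Field F] {s : Finset ι} {b : ι → F} {a i : ι}

/-- The coefficient `ψ_i` of the hypoexponential distribution with set of rates `b k`, `k ∈ s`. -/
def hypoexpWeight (s : Finset ι) (b : ι → F) (i : ι) : F :=
  ∏ k ∈ s.erase i, b k / (b k - b i)

theorem hypoexpWeight_eq_eval_zero_basis (s : Finset ι) (b : ι → F) (i : ι) :
    hypoexpWeight s b i = (Lagrange.basis s b i).eval 0 := by
  rw [hypoexpWeight, Lagrange.basis, Polynomial.eval_prod]
  refine prod_congr rfl fun k _ => ?_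
  rw [Lagrange.basisDivisor, ← neg_sub (b k) (b i), inv_neg]
  simp [div_eq_inv_mul]

theorem hypoexpWeight_insert_of_mem (ha : a ∉ s) (hi : i ∈ s) :
    hypoexpWeight (insert a s) b i = b a / (b a - b i) * hypoexpWeight s b i := by
  have hai : a ≠ i := fun h => ha (h ▸ hi)
  rw [hypoexpWeight, erase_insert_of_ne hai, prod_insert fun h => ha (mem_of_mem_erase h),
    hypoexpWeight]

theorem sum_hypoexpWeight_mul_eval (hb : Set.InjOn b s) {p : Polynomial F} (hp : p.degree < #s) :
    ∑ i ∈ s, hypoexpWeight s b i * p.eval (b i) = p.eval 0 := by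
  conv_rhs => rw [Lagrange.eq_interpolate hb hp, Lagrange.interpolate_apply,
    Polynomial.eval_finsetSum]
  refine sum_congr rfl fun i _ => ?_
  rw [hypoexpWeight_eq_eval_zero_basis, Polynomial.eval_mul, Polynomial.eval_C, mul_comm]

theorem sum_hypoexpWeight (hb : Set.InjOn b s) (hs : s.Nonempty) :
    ∑ i ∈ s, hypoexpWeight s b i = 1 := by
  simpa using sum_hypoexpWeight_mul_eval hb (p := 1) (by simpa using hs)

theorem sum_mul_hypoexpWeight (hb : Set.InjOn b s) (hs : s.Nontrivial) :
    ∑ i ∈ s, b i * hypoexpWeight s b i = 0 := by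
  simpa [mul_comm] using sum_hypoexpWeight_mul_eval hb (p := Polynomial.X)
    (by simpa using one_lt_card_iff_nontrivial.2 hs)

theorem sum_hypoexpWeight_div (hb : Set.InjOn b s) (hb₀ : ∀ i ∈ s, b i ≠ 0) :
    ∑ i ∈ s, hypoexpWeight s b i / b i = ∑ i ∈ s, 1 / b i := by
  induction s using Finset.induction_on with
  | empty => simp
  | insert a s ha ih =>
    have ih := ih (hb.mono (by simp)) fun i hi => hb₀ i (mem_insert_of_mem hi)
    have ha₀ : b a ≠ 0 := hb₀ a (mem_insert_self a s)
    have weight_div : ∀ i ∈ s, hypoexpWeight (insert a s) b i / b i =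
        hypoexpWeight s b i / b i + hypoexpWeight (insert a s) b i / b a := by
      intro i hi
      have hi₀ : b i ≠ 0 := hb₀ i (mem_insert_of_mem hi)
      have hai : b a - b i ≠ 0 := sub_ne_zero.2 <|
        hb.ne (mem_insert_self a s) (mem_insert_of_mem hi) fun h => ha (h ▸ hi)
      rw [hypoexpWeight_insert_of_mem ha hi]
      field_simp
      ring
    calc ∑ i ∈ insert a s, hypoexpWeight (insert a s) b i / b i
        = ∑ i ∈ insert a s, hypoexpWeight (insert a s) b i / b a
          + ∑ i ∈ s, hypoexpWeight s b i / b i := by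
          rw [sum_insert ha, sum_insert ha, sum_congr rfl weight_div, sum_add_distrib]
          ring
      _ = ∑ i ∈ insert a s, 1 / b i := by
          rw [← sum_div, sum_hypoexpWeight hb (insert_nonempty a s), ih, sum_insert ha]

end Weights

section Analysis

theorem nonneg_of_hasDerivAt_add_mul_nonneg {f f' : ℝ → ℝ} {x₀ c : ℝ}
    (hf : ContinuousOn f (Set.Ici x₀)) (hf' : ∀ x, x₀ < x → HasDerivAt f (f' x) x)
    (h₀ : 0 ≤ f x₀) (h : ∀ x, x₀ < x → 0 ≤ f' x + c * f x) {x : ℝ} (hx : x₀ ≤ x) :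
    0 ≤ f x := by
  have hderiv : ∀ y, x₀ < y →
      HasDerivAt (fun y => Real.exp (c * y) * f y) (Real.exp (c * y) * (f' y + c * f y)) y := by
    intro y hy
    have hexp : HasDerivAt (fun y => Real.exp (c * y)) (Real.exp (c * y) * c) y := by
      simpa using ((hasDerivAt_id y).const_mul c).exp
    exact (hexp.mul (hf' y hy)).congr_deriv (by ring)
  have hmono : MonotoneOn (fun y => Real.exp (c * y) * f y) (Set.Ici x₀) := by
    refine monotoneOn_of_hasDerivWithinAt_nonneg (convex_Ici x₀)
      (by fun_prop) (f' := fun y => Real.exp (c * y) * (f' y + c * f y)) ?_ ?_ <;>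
      rw [interior_Ici]
    · exact fun y hy => (hderiv y hy).hasDerivWithinAt
    · exact fun y hy => mul_nonneg (Real.exp_pos _).le (h y hy)
  refine nonneg_of_mul_nonneg_right ?_ (Real.exp_pos (c * x))
  exact (mul_nonneg (Real.exp_pos _).le h₀).trans (hmono Set.self_mem_Ici hx hx)

variable {c : ℝ}

theorem integral_pow_mul_exp_neg_mul_Ioi (n : ℕ) (hc : 0 < c) :
    ∫ x in Set.Ioi (0 : ℝ), x ^ n * Real.exp (-c * x) = n.factorial / c ^ (n + 1) := by
  have h := Real.integral_rpow_mul_exp_neg_mul_Ioi (a := n + 1) (by positivity) hc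
  rw [Real.Gamma_nat_eq_factorial] at h
  simp only [add_sub_cancel_right, Real.rpow_natCast] at h
  norm_cast at h
  simpa [div_eq_inv_mul] using h

theorem integrableOn_pow_mul_exp_neg_mul_Ioi (n : ℕ) (hc : 0 < c) :
    IntegrableOn (fun x => x ^ n * Real.exp (-c * x)) (Set.Ioi 0) := by
  refine Integrable.of_integral_ne_zero ?_
  rw [integral_pow_mul_exp_neg_mul_Ioi n hc]
  positivity

end Analysis

section Density

variable {ι : Type*} [DecidableEq ι] {s : Finset ι} {b : ι → ℝ}

/-- The density on `[0, ∞)` of the hypoexponential distribution, i.e. of a sum of independent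
exponential variables with distinct rates `b i`, `i ∈ s`. It is given by the same formula at
negative arguments, and is `0` for `s = ∅`. -/
noncomputable def hypoexpDensity (s : Finset ι) (b : ι → ℝ) (x : ℝ) : ℝ :=
  ∑ i ∈ s, b i * hypoexpWeight s b i * Real.exp (-(b i) * x)

theorem hypoexpDensity_zero_nonneg (hb : Set.InjOn b s) (hpos : ∀ i ∈ s, 0 < b i) :
    0 ≤ hypoexpDensity s b 0 := by
  rcases s.eq_empty_or_nonempty with rfl | hs
  · simp [hypoexpDensity]
  obtain ⟨i, rfl⟩ | hs := hs.exists_eq_singleton_or_nontrivial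
  · simpa [hypoexpDensity, hypoexpWeight] using (hpos i (mem_singleton_self i)).le
  · simp [hypoexpDensity, sum_mul_hypoexpWeight hb hs]

theorem hasDerivAt_hypoexpDensity (s : Finset ι) (b : ι → ℝ) (x : ℝ) :
    HasDerivAt (hypoexpDensity s b)
      (∑ i ∈ s, -(b i) * (b i * hypoexpWeight s b i * Real.exp (-(b i) * x))) x := by
  refine HasDerivAt.fun_sum fun i _ => ?_
  have hexp : HasDerivAt (fun y => Real.exp (-(b i) * y)) (Real.exp (-(b i) * x) * -(b i)) x := by
    simpa using ((hasDerivAt_id x).const_mul (-(b i))).exp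
  exact (hexp.const_mul _).congr_deriv (by ring)

theorem hasDerivAt_hypoexpDensity_insert {a : ι} (ha : ∀ i ∈ s, b i ≠ b a) (x : ℝ) :
    HasDerivAt (hypoexpDensity (insert a s) b)
      (b a * (hypoexpDensity s b x - hypoexpDensity (insert a s) b x)) x := by
  have has : a ∉ s := fun h => ha a h rfl
  have weight_rec : ∀ i ∈ s, (b a - b i) * hypoexpWeight (insert a s) b i =
      b a * hypoexpWeight s b i := by
    intro i hi
    have hai : b a - b i ≠ 0 := sub_ne_zero.2 (ha i hi).symm
    rw [hypoexpWeight_insert_of_mem has hi]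
    field_simp
  refine (hasDerivAt_hypoexpDensity (insert a s) b x).congr_deriv ?_
  rw [mul_sub, eq_sub_iff_add_eq]
  simp only [hypoexpDensity, mul_sum, ← sum_add_distrib]
  rw [sum_insert has, neg_mul, neg_add_cancel, zero_add]
  refine sum_congr rfl fun i hi => ?_
  linear_combination b i * Real.exp (-(b i) * x) * weight_rec i hi

theorem hypoexpDensity_nonneg (hb : Set.InjOn b s) (hpos : ∀ i ∈ s, 0 < b i) {x : ℝ}
    (hx : 0 ≤ x) : 0 ≤ hypoexpDensity s b x := by
  induction s using Finset.induction_on generalizing x with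
  | empty => simp [hypoexpDensity]
  | insert a s ha ih =>
    have ih : ∀ y, 0 ≤ y → 0 ≤ hypoexpDensity s b y := fun y hy =>
      ih (hb.mono (by simp)) (fun i hi => hpos i (mem_insert_of_mem hi)) hy
    have hab : ∀ i ∈ s, b i ≠ b a := fun i hi =>
      hb.ne (mem_insert_of_mem hi) (mem_insert_self a s) fun h => ha (h ▸ hi)
    have hderiv := hasDerivAt_hypoexpDensity_insert hab
    refine nonneg_of_hasDerivAt_add_mul_nonneg (c := b a)
      (fun y _ => (hderiv y).continuousAt.continuousWithinAt) (fun y _ => hderiv y)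
      (hypoexpDensity_zero_nonneg hb hpos) (fun y hy => ?_) hx
    rw [mul_sub, sub_add_cancel]
    exact mul_nonneg (hpos a (mem_insert_self a s)).le (ih y hy.le)

theorem integral_pow_mul_hypoexpDensity (hpos : ∀ i ∈ s, 0 < b i) (n : ℕ) :
    ∫ x in Set.Ioi (0 : ℝ), x ^ n * hypoexpDensity s b x =
      n.factorial * ∑ i ∈ s, hypoexpWeight s b i / b i ^ n := by
  have expand : ∀ x : ℝ, x ^ n * hypoexpDensity s b x =
      ∑ i ∈ s, b i * hypoexpWeight s b i * (x ^ n * Real.exp (-(b i) * x)) := fun x => by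
    rw [hypoexpDensity, mul_sum]
    exact sum_congr rfl fun i _ => by ring
  simp only [expand]
  rw [integral_finsetSum _ fun i hi =>
    (integrableOn_pow_mul_exp_neg_mul_Ioi n (hpos i hi)).const_mul _, mul_sum]
  refine sum_congr rfl fun i hi => ?_
  have hi₀ : b i ≠ 0 := (hpos i hi).ne'
  rw [integral_const_mul, integral_pow_mul_exp_neg_mul_Ioi n (hpos i hi), pow_succ]
  field_simp

theorem integral_hypoexpDensity (hb : Set.InjOn b s) (hpos : ∀ i ∈ s, 0 < b i)
    (hs : s.Nonempty) : ∫ x in Set.Ioi (0 : ℝ), hypoexpDensity s b x = 1 := by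
  simpa [sum_hypoexpWeight hb hs] using integral_pow_mul_hypoexpDensity hpos 0

theorem integral_mul_hypoexpDensity (hb : Set.InjOn b s) (hpos : ∀ i ∈ s, 0 < b i) :
    ∫ x in Set.Ioi (0 : ℝ), x * hypoexpDensity s b x = ∑ i ∈ s, 1 / b i := by
  rw [← sum_hypoexpWeight_div hb fun i hi => (hpos i hi).ne']
  simpa using integral_pow_mul_hypoexpDensity hpos 1

end Density

theorem sum_Icc_one_sub_pred {G : Type*} [AddCommGroup G] (t : ℕ → G) (n : ℕ) :
    ∑ k ∈ Icc 1 n, (t k - t (k - 1)) = t n - t 0 := by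
  induction n with
  | zero => simp
  | succ n ih => rw [sum_Icc_succ_top n.succ_pos, ih, Nat.add_sub_cancel]; abel

/-- **Kernels with prescribed mean times.**  Given `0 = t₀ < t₁ < ⋯ < t_N` with pairwise
distinct increments, the rates `b_j = 1/(t_j − t_{j−1})` are positive and pairwise distinct,
and the kernels `K_j` are nonnegative, have total mass `1` and mean time `t_j`. -/
theorem stmt_5 (N : ℕ) (hN : 1 ≤ N) (t : ℕ → ℝ) (ht0 : t 0 = 0)
    (hmono : ∀ j ∈ Finset.Icc 1 N, t (j - 1) < t j)
    (hdiff : ∀ i ∈ Finset.Icc 1 N, ∀ j ∈ Finset.Icc 1 N, i ≠ j →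
      t i - t (i - 1) ≠ t j - t (j - 1))
    (b : ℕ → ℝ) (hb : ∀ j ∈ Finset.Icc 1 N, b j = 1 / (t j - t (j - 1)))
    (K : ℕ → ℝ → ℝ)
    (hK : ∀ j, K j = fun s => ∑ i ∈ Finset.Icc 1 j,
      b i * (∏ k ∈ (Finset.Icc 1 j).erase i, b k / (b k - b i)) * Real.exp (-(b i) * s)) :
    (∀ j ∈ Finset.Icc 1 N, 0 < b j) ∧
    (∀ i ∈ Finset.Icc 1 N, ∀ j ∈ Finset.Icc 1 N, i ≠ j → b i ≠ b j) ∧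
    (∀ j ∈ Finset.Icc 1 N, ∀ s : ℝ, 0 ≤ s → 0 ≤ K j s) ∧
    (∀ j ∈ Finset.Icc 1 N, ∫ s in Set.Ioi (0:ℝ), K j s = 1) ∧
    (∀ j ∈ Finset.Icc 1 N, ∫ s in Set.Ioi (0:ℝ), s * K j s = t j) := by
  have hpos : ∀ j ∈ Icc 1 N, 0 < b j := fun j hj => by
    rw [hb j hj]
    exact one_div_pos.2 (sub_pos.2 (hmono j hj))
  have hne : ∀ i ∈ Icc 1 N, ∀ j ∈ Icc 1 N, i ≠ j → b i ≠ b j := fun i hi j hj hij => by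
    simpa [hb i hi, hb j hj] using hdiff i hi j hj hij
  have hsub : ∀ j ∈ Icc 1 N, Icc 1 j ⊆ Icc 1 N := fun j hj =>
    Icc_subset_Icc_right (mem_Icc.1 hj).2
  have hposOn : ∀ j ∈ Icc 1 N, ∀ i ∈ Icc 1 j, 0 < b i := fun j hj i hi => hpos i (hsub j hj hi)
  have hinjOn : ∀ j ∈ Icc 1 N, Set.InjOn b (Icc 1 j) := fun j hj i hi k hk hik =>
    by_contra fun h => hne i (hsub j hj hi) k (hsub j hj hk) h hik
  obtain rfl : K = fun j => hypoexpDensity (Icc 1 j) b := funext hK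
  refine ⟨hpos, hne, fun j hj s hs => hypoexpDensity_nonneg (hinjOn j hj) (hposOn j hj) hs,
    fun j hj => integral_hypoexpDensity (hinjOn j hj) (hposOn j hj)
      (nonempty_Icc.2 (mem_Icc.1 hj).1), fun j hj => ?_⟩
  calc ∫ s in Set.Ioi (0 : ℝ), s * hypoexpDensity (Icc 1 j) b s
      = ∑ k ∈ Icc 1 j, 1 / b k := integral_mul_hypoexpDensity (hinjOn j hj) (hposOn j hj)
    _ = ∑ k ∈ Icc 1 j, (t k - t (k - 1)) :=
        sum_congr rfl fun k hk => by rw [hb k (hsub j hj hk), one_div_one_div]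
    _ = t j := by rw [sum_Icc_one_sub_pred, ht0, sub_zero]
end

section
/- Let α_1 > α_2 > 0 and c_1, c_2 ∈ ℝ with c_1 + c_2 ≥ 0 and c_2 ≥ 0, let K(t) = c_1 e^{−α_1 t} + c_2 e^{−α_2 t}, and set a = (α_1 c_2 + α_2 c_1)/(α_1 α_2). Define b_1 = α_1, b_2 = α_2, a_2 = c_2(α_1 − α_2)/(α_1 α_2), a_1 = (c_1 + c_2)/α_1. Then a_1, a_2 ≥ 0, a = a_1 + a_2, and for every differentiable u : [0,∞) → ℝ with u'(t) = −a·u(t) + ∫_0^t K(t−s)·u(s) ds for all t ≥ 0 and u(0) = u_0, there exists a differentiable p : [0,∞) → ℝ^3 with p'(t) = B* p(t), p(0) = (u_0, 0, 0), whose first component equals u. -/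
open MeasureTheory

/-!
Partial fractions turn the scalar memory equation into a linear chain of states. The memory term
`m = K * u` and the single exponential `J t = ∫ s in 0..t, exp (-α₂ * (t - s)) * u s` satisfy
`m' = (c₁ + c₂) u - α₁ m + c₂ (α₁ - α₂) J` and `J' = u - α₂ J`. Rescaling to
`p = (u, m / α₁, a₂ J)` makes `m` the flow at rate `b₁ = α₁` back into the first state, and the
columns of the resulting matrix sum to zero.
-/

section MemoryIntegral

variable {E : Type*} [NormedAddCommGroup E] [NormedSpace ℝ E]

/-- The memory term `(K * v) t`: the convolution of the kernel `K` with the history of `v` since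
time `0`, as an interval integral. -/
noncomputable def memoryIntegral (K : ℝ → ℝ) (v : ℝ → E) (t : ℝ) : E :=
  ∫ s in (0 : ℝ)..t, K (t - s) • v s

/-- The kernel of exponential memory loss with rate `α`. -/
noncomputable def expKernel (α t : ℝ) : ℝ :=
  Real.exp (-α * t)

/-- The kernel `c₁ e^{-α₁ t} + c₂ e^{-α₂ t}`. -/
noncomputable def biexpKernel (c₁ c₂ α₁ α₂ t : ℝ) : ℝ :=
  c₁ * expKernel α₁ t + c₂ * expKernel α₂ t

@[fun_prop]
lemma continuous_expKernel (α : ℝ) : Continuous (expKernel α) := by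
  unfold expKernel
  fun_prop

@[simp]
lemma memoryIntegral_apply_zero (K : ℝ → ℝ) (v : ℝ → E) : memoryIntegral K v 0 = 0 :=
  intervalIntegral.integral_same

lemma memoryIntegral_congr (K : ℝ → ℝ) {v w : ℝ → E} {t : ℝ} (h : Set.EqOn v w (Set.uIcc 0 t)) :
    memoryIntegral K v t = memoryIntegral K w t :=
  intervalIntegral.integral_congr fun s hs => congrArg (K (t - s) • ·) (h hs)

lemma memoryIntegral_linearCombination_kernel (c₁ c₂ : ℝ) {K₁ K₂ : ℝ → ℝ} {v : ℝ → E}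
    (hK₁ : Continuous K₁) (hK₂ : Continuous K₂) (hv : Continuous v) (t : ℝ) :
    memoryIntegral (fun r => c₁ * K₁ r + c₂ * K₂ r) v t =
      c₁ • memoryIntegral K₁ v t + c₂ • memoryIntegral K₂ v t := by
  have integrable {K : ℝ → ℝ} (hK : Continuous K) (c : ℝ) :
      IntervalIntegrable (fun s => c • K (t - s) • v s) volume 0 t :=
    Continuous.intervalIntegrable (by fun_prop) 0 t
  simp only [memoryIntegral, ← intervalIntegral.integral_smul]
  rw [← intervalIntegral.integral_add (integrable hK₁ c₁) (integrable hK₂ c₂)]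
  simp only [add_smul, mul_smul]

lemma memoryIntegral_expKernel_eq_smul_integral (α : ℝ) (v : ℝ → E) (t : ℝ) :
    memoryIntegral (expKernel α) v t =
      Real.exp (-α * t) • ∫ s in (0 : ℝ)..t, Real.exp (α * s) • v s := by
  have expKernel_sub (s : ℝ) : expKernel α (t - s) = Real.exp (-α * t) * Real.exp (α * s) := by
    rw [expKernel, ← Real.exp_add]
    ring_nf
  simp only [memoryIntegral, expKernel_sub, mul_smul, intervalIntegral.integral_smul]

variable [CompleteSpace E] {v : ℝ → E}

lemma hasDerivAt_memoryIntegral_expKernel (α : ℝ) (hv : Continuous v) (t : ℝ) :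
    HasDerivAt (memoryIntegral (expKernel α) v)
      (v t - α • memoryIntegral (expKernel α) v t) t := by
  have hasDerivAt_integral : HasDerivAt (fun r => ∫ s in (0 : ℝ)..r, Real.exp (α * s) • v s)
      (Real.exp (α * t) • v t) t :=
    (Continuous.integral_hasStrictDerivAt (by fun_prop) 0 t).hasDerivAt
  have hasDerivAt_exp : HasDerivAt (fun r => Real.exp (-α * r)) (Real.exp (-α * t) * -α) t :=
    (hasDerivAt_const_mul (-α)).exp
  have exp_mul_exp : Real.exp (-α * t) * Real.exp (α * t) = 1 := by
    rw [← Real.exp_add, neg_mul, neg_add_cancel, Real.exp_zero]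
  rw [funext (memoryIntegral_expKernel_eq_smul_integral α v)]
  refine (hasDerivAt_exp.smul hasDerivAt_integral).congr_deriv ?_
  rw [smul_smul, exp_mul_exp, one_smul]
  module

lemma hasDerivAt_memoryIntegral_biexpKernel (c₁ c₂ α₁ α₂ : ℝ) (hv : Continuous v) (t : ℝ) :
    HasDerivAt (memoryIntegral (biexpKernel c₁ c₂ α₁ α₂) v)
      ((c₁ + c₂) • v t - α₁ • memoryIntegral (biexpKernel c₁ c₂ α₁ α₂) v t +
        (c₂ * (α₁ - α₂)) • memoryIntegral (expKernel α₂) v t) t := by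
  have biexp_eq (r : ℝ) : memoryIntegral (biexpKernel c₁ c₂ α₁ α₂) v r =
      c₁ • memoryIntegral (expKernel α₁) v r + c₂ • memoryIntegral (expKernel α₂) v r :=
    memoryIntegral_linearCombination_kernel c₁ c₂ (continuous_expKernel α₁)
      (continuous_expKernel α₂) hv r
  rw [funext biexp_eq]
  refine (((hasDerivAt_memoryIntegral_expKernel α₁ hv t).const_smul c₁).add
    ((hasDerivAt_memoryIntegral_expKernel α₂ hv t).const_smul c₂)).congr_deriv ?_
  module

end MemoryIntegral

section ThreeStates

/-- The matrix `B*` acting on probability (column) vectors: state `0` jumps to state `i` at rate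
`aᵢ`, state `2` jumps to state `1` at rate `b₂`, and state `1` jumps to state `0` at rate `b₁`. -/
def threeStateGenerator (a₁ a₂ b₁ b₂ : ℝ) : Matrix (Fin 3) (Fin 3) ℝ :=
  !![-a₁ - a₂, b₁, 0; a₁, -b₁, b₂; a₂, 0, -b₂]

lemma threeStateGenerator_mulVec (a₁ a₂ b₁ b₂ x y z : ℝ) :
    (threeStateGenerator a₁ a₂ b₁ b₂).mulVec ![x, y, z] =
      ![-(a₁ + a₂) * x + b₁ * y, a₁ * x - b₁ * y + b₂ * z, a₂ * x - b₂ * z] := by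
  ext i
  fin_cases i <;> simp [threeStateGenerator, sub_eq_add_neg] <;> ring

variable {a₁ a₂ b₁ b₂ : ℝ}

lemma hasDerivAt_threeStateGenerator {x y z : ℝ → ℝ} {t : ℝ}
    (hx : HasDerivAt x (-(a₁ + a₂) * x t + b₁ * y t) t)
    (hy : HasDerivAt y (a₁ * x t - b₁ * y t + b₂ * z t) t)
    (hz : HasDerivAt z (a₂ * x t - b₂ * z t) t) :
    HasDerivAt (fun r => ![x r, y r, z r])
      ((threeStateGenerator a₁ a₂ b₁ b₂).mulVec ![x t, y t, z t]) t := by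
  rw [threeStateGenerator_mulVec, hasDerivAt_pi]
  intro i
  fin_cases i
  exacts [hx, hy, hz]

theorem exists_hasDerivAt_threeStateGenerator_of_memory {c₁ c₂ : ℝ} (hb₁ : b₁ ≠ 0)
    (h_sum : c₁ + c₂ = b₁ * a₁) (h_diff : c₂ * (b₁ - b₂) = b₁ * b₂ * a₂) {u : ℝ → ℝ}
    (hu : ∀ t, 0 ≤ t →
      HasDerivAt u (-(a₁ + a₂) * u t + memoryIntegral (biexpKernel c₁ c₂ b₁ b₂) u t) t) :
    ∃ p : ℝ → Fin 3 → ℝ,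
      (∀ t, 0 ≤ t → HasDerivAt p ((threeStateGenerator a₁ a₂ b₁ b₂).mulVec (p t)) t) ∧
      p 0 = ![u 0, 0, 0] ∧ ∀ t, p t 0 = u t := by
  -- `u` is arbitrary on `t < 0`, where even measurability may fail, so the memory integrals are
  -- taken of the constant extension `v` of `u` from `[0, ∞)`; those of `u` itself need not be
  -- differentiable at `0`.
  let v : ℝ → ℝ := fun s => u (max s 0)
  have continuous_v : Continuous v :=
    continuous_iff_continuousAt.2 fun s =>
      (hu _ (le_max_right s 0)).continuousAt.comp (f := fun s : ℝ => max s 0) (by fun_prop)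
  have v_eq {t : ℝ} (ht : 0 ≤ t) : v t = u t := congrArg u (max_eq_left ht)
  let m := memoryIntegral (biexpKernel c₁ c₂ b₁ b₂) v
  let J := memoryIntegral (expKernel b₂) v
  have m_eq {t : ℝ} (ht : 0 ≤ t) : m t = memoryIntegral (biexpKernel c₁ c₂ b₁ b₂) u t :=
    memoryIntegral_congr _ fun s hs => v_eq (Set.uIcc_of_le ht ▸ hs).1
  refine ⟨fun t => ![u t, m t / b₁, a₂ * J t], fun t ht => ?_, by simp [m, J], fun _ => rfl⟩
  apply hasDerivAt_threeStateGenerator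
  · rw [mul_div_cancel₀ _ hb₁, m_eq ht]
    exact hu t ht
  · refine ((hasDerivAt_memoryIntegral_biexpKernel c₁ c₂ b₁ b₂ continuous_v t).div_const
      b₁).congr_deriv ?_
    rw [h_sum, h_diff, v_eq ht]
    simp only [smul_eq_mul, m, J]
    field_simp
  · refine ((hasDerivAt_memoryIntegral_expKernel b₂ continuous_v t).const_mul a₂).congr_deriv ?_
    rw [v_eq ht, smul_eq_mul]
    ring

end ThreeStates

/-- **Three states: from Memory to Markov.**  For a two-exponential kernel with
`α₁ > α₂ > 0`, `c₁ + c₂ ≥ 0`, `c₂ ≥ 0`, the explicitly constructed rates are nonnegative,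
consistent, and the solution of the memory equation is the first component of a
three-dimensional Markov process. -/
theorem stmt_9 (α₁ α₂ c₁ c₂ : ℝ) (hα : α₂ < α₁) (hα₂ : 0 < α₂)
    (hc : 0 ≤ c₁ + c₂) (hc₂ : 0 ≤ c₂) (u₀ : ℝ)
    (K : ℝ → ℝ)
    (hK : K = fun t => c₁ * Real.exp (-α₁ * t) + c₂ * Real.exp (-α₂ * t))
    (a : ℝ) (ha : a = (α₁ * c₂ + α₂ * c₁) / (α₁ * α₂))
    (b₁ b₂ a₁ a₂ : ℝ)
    (hb₁ : b₁ = α₁) (hb₂ : b₂ = α₂)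
    (ha₂ : a₂ = c₂ * (α₁ - α₂) / (α₁ * α₂)) (ha₁ : a₁ = (c₁ + c₂) / α₁) :
    0 ≤ a₁ ∧ 0 ≤ a₂ ∧ a = a₁ + a₂ ∧
    ∀ u : ℝ → ℝ,
      (∀ t : ℝ, 0 ≤ t →
        HasDerivAt u (-a * u t + ∫ s in (0:ℝ)..t, K (t - s) * u s) t) →
      u 0 = u₀ →
      ∃ p : ℝ → Fin 3 → ℝ,
        (∀ t : ℝ, 0 ≤ t →
          HasDerivAt p ((!![-a₁ - a₂, b₁, 0; a₁, -b₁, b₂; a₂, 0, -b₂]).mulVec (p t)) t) ∧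
        p 0 = ![u₀, 0, 0] ∧
        ∀ t : ℝ, 0 ≤ t → p t 0 = u t := by
  have hα₁ : 0 < α₁ := hα₂.trans hα
  have ha_sum : a = a₁ + a₂ := by
    rw [ha, ha₁, ha₂]
    field_simp
    ring
  have h_sum : c₁ + c₂ = α₁ * a₁ := by
    rw [ha₁]
    field_simp
  have h_diff : c₂ * (α₁ - α₂) = α₁ * α₂ * a₂ := by
    rw [ha₂]
    field_simp
  refine ⟨?_, ?_, ha_sum, fun u hu hu₀ => ?_⟩
  · exact ha₁ ▸ div_nonneg hc hα₁.le
  · exact ha₂ ▸ div_nonneg (mul_nonneg hc₂ (sub_nonneg.2 hα.le)) (mul_pos hα₁ hα₂).le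
  subst hK hb₁ hb₂ ha_sum hu₀
  obtain ⟨p, hp, hp₀, hpu⟩ :=
    exists_hasDerivAt_threeStateGenerator_of_memory hα₁.ne' h_sum h_diff hu
  exact ⟨p, hp, hp₀, fun t _ => hpu t⟩
end

section
/- There do not exist nonnegative real numbers A, B, C, D, E, F, G such that for all t ≥ 0: 3e^{−t} − 8e^{−2t} + 6e^{−3t} = A e^{−3t} + B e^{−2t} + C e^{−t} + D(e^{−t} − e^{−2t}) + (E/2)(e^{−t} − e^{−3t}) + F(e^{−2t} − e^{−3t}) + G(e^{−t}/2 − e^{−2t} + e^{−3t}/2). Consequently, not every nonnegative linear combination of exponentials can be written as a nonnegative combination of the loop kernels K_j with decay rates 1, 2, 3. -/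
/-!
Up to positive factors, the seven kernels have the form `e^{-rt} (1 - e^{-dt})^n` with `d ≥ 0` and
`r + nd ≤ 3`. Multiplied by `e^{3t}`, such a kernel becomes `e^{(3-r-nd)t} (e^{dt} - 1)^n`, which is
nondecreasing on `[0, ∞)`, and this property passes to nonnegative combinations. If `e^{3t} f(t)` is
nondecreasing, then `f'(0) ≥ -3 f(0)`; but the kernel in question starts at `1` with slope `-5`.
-/

open Real Set

/-- The cone of kernels `f` that decay at rate at most `c` on `[0, ∞)`, in the sense that
`t ↦ e^{ct} f(t)` is nondecreasing there. It serves to separate a kernel from a cone of loop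
kernels. The sign of `f` and its values at negative times are not constrained. -/
def decayCone (c : ℝ) : PointedCone ℝ (ℝ → ℝ) where
  carrier := {f | MonotoneOn (fun t ↦ exp (c * t) * f t) (Ici 0)}
  add_mem' hf hg := (hf.add hg).congr fun t _ ↦ (mul_add _ _ _).symm
  zero_mem' := by simpa only [mem_ofPred_eq, Pi.zero_apply, mul_zero] using monotoneOn_const
  smul_mem' a f hf := (monotone_mul_left_of_nonneg a.2).comp_monotoneOn hf |>.congr
    fun t _ ↦ mul_left_comm _ _ _

/-- The loop kernel, up to normalization, of a Markov loop through `n + 1` states whose rates are in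
arithmetic progression `r, r + d, …, r + n d`, written as the binomial sum
`∑ k, (-1)^k (n choose k) e^{-(r + k d) t}` in factored form. For `n = 0` it is a single
exponential. -/
noncomputable def loopKernel (r d : ℝ) (n : ℕ) (t : ℝ) : ℝ :=
  exp (-r * t) * (1 - exp (-d * t)) ^ n

section DecayCone

variable {c r d : ℝ} {n : ℕ} {f g : ℝ → ℝ}

theorem mem_decayCone : f ∈ decayCone c ↔ MonotoneOn (fun t ↦ exp (c * t) * f t) (Ici 0) :=
  Iff.rfl

theorem mem_decayCone_of_eqOn (hf : f ∈ decayCone c) (hfg : EqOn f g (Ici 0)) :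
    g ∈ decayCone c :=
  MonotoneOn.congr hf fun t ht ↦ congrArg (exp (c * t) * ·) (hfg ht)

theorem hasDerivAt_exp_mul_zero (r : ℝ) : HasDerivAt (fun t ↦ exp (r * t)) r 0 := by
  simpa using ((hasDerivAt_id (0 : ℝ)).const_mul r).exp

theorem neg_mul_le_deriv_of_mem_decayCone {f' : ℝ} (hf : f ∈ decayCone c)
    (hf' : HasDerivWithinAt f f' (Ici 0) 0) : -c * f 0 ≤ f' := by
  have hderiv : HasDerivWithinAt (fun t ↦ exp (c * t) * f t) (c * f 0 + f') (Ici 0) 0 := by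
    simpa using (hasDerivAt_exp_mul_zero c).hasDerivWithinAt.fun_mul hf'
  have hnonneg : 0 ≤ c * f 0 + f' := by
    rw [← hderiv.derivWithin (uniqueDiffWithinAt_Ici 0)]
    exact (mem_decayCone.mp hf).derivWithin_nonneg
  linarith

theorem sum_sub_mul_nonneg_of_mem_decayCone {ι : Type*} {s : Finset ι} {a r : ι → ℝ}
    (hmem : (fun t ↦ ∑ i ∈ s, a i * exp (-r i * t)) ∈ decayCone c) :
    0 ≤ ∑ i ∈ s, (c - r i) * a i := by
  have hderiv : HasDerivAt (fun t ↦ ∑ i ∈ s, a i * exp (-r i * t)) (∑ i ∈ s, a i * -r i) 0 :=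
    HasDerivAt.fun_sum fun i _ ↦ (hasDerivAt_exp_mul_zero (-r i)).const_mul (a i)
  have hslope := neg_mul_le_deriv_of_mem_decayCone hmem hderiv.hasDerivWithinAt
  simp only [mul_zero, exp_zero, mul_one] at hslope
  calc 0 ≤ c * ∑ i ∈ s, a i + ∑ i ∈ s, a i * -r i := by linarith
    _ = ∑ i ∈ s, (c - r i) * a i := by
      rw [Finset.mul_sum, ← Finset.sum_add_distrib]
      exact Finset.sum_congr rfl fun i _ ↦ by ring

theorem exp_mul_loopKernel (c r d : ℝ) (n : ℕ) (t : ℝ) :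
    exp (c * t) * loopKernel r d n t = exp ((c - (r + n * d)) * t) * (exp (d * t) - 1) ^ n := by
  have hfactor : exp (d * t) - 1 = exp (d * t) * (1 - exp (-d * t)) := by
    rw [mul_one_sub, ← exp_add, neg_mul, add_neg_cancel, exp_zero]
  rw [hfactor, mul_pow, ← exp_nat_mul, loopKernel, ← mul_assoc, ← mul_assoc, ← exp_add, ← exp_add]
  ring_nf

theorem loopKernel_mem_decayCone (hd : 0 ≤ d) (hc : r + n * d ≤ c) :
    loopKernel r d n ∈ decayCone c := by
  simp only [mem_decayCone, exp_mul_loopKernel]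
  intro s hs t _ hst
  have hrate : 0 ≤ c - (r + n * d) := sub_nonneg.mpr hc
  have hbase : 0 ≤ exp (d * s) - 1 := sub_nonneg.mpr (one_le_exp (mul_nonneg hd hs))
  have hbase_le : exp (d * s) - 1 ≤ exp (d * t) - 1 := by gcongr
  exact mul_le_mul (exp_le_exp.mpr (mul_le_mul_of_nonneg_left hst hrate))
    (pow_le_pow_left₀ hbase hbase_le n) (pow_nonneg hbase n) (exp_nonneg _)

end DecayCone

theorem loopKernel_exponent_zero (r d t : ℝ) : loopKernel r d 0 t = exp (-r * t) := by
  rw [loopKernel, pow_zero, mul_one]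

theorem loopKernel_exponent_one (r d t : ℝ) :
    loopKernel r d 1 t = exp (-r * t) - exp (-(r + d) * t) := by
  rw [loopKernel, pow_one, mul_one_sub, ← exp_add]
  ring_nf

theorem loopKernel_exponent_two (r d t : ℝ) :
    loopKernel r d 2 t =
      exp (-r * t) - 2 * exp (-(r + d) * t) + exp (-(r + 2 * d) * t) := by
  have hmid : exp (-(r + d) * t) = exp (-r * t) * exp (-d * t) := by
    rw [← exp_add]; ring_nf
  have hlast : exp (-(r + 2 * d) * t) = exp (-r * t) * exp (-d * t) ^ 2 := by
    rw [← exp_nat_mul, ← exp_add]; push_cast; ring_nf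
  rw [loopKernel, hmid, hlast]
  ring

/-- **Counterexample.**  The nonnegative kernel `3e^{−t} − 8e^{−2t} + 6e^{−3t}` cannot be
written as a nonnegative combination of the loop kernels with decay rates `1, 2, 3`. -/
theorem stmt_12 :
    ¬ ∃ A B C D E F G : ℝ,
      0 ≤ A ∧ 0 ≤ B ∧ 0 ≤ C ∧ 0 ≤ D ∧ 0 ≤ E ∧ 0 ≤ F ∧ 0 ≤ G ∧
      ∀ t : ℝ, 0 ≤ t →
        3 * Real.exp (-t) - 8 * Real.exp (-2 * t) + 6 * Real.exp (-3 * t) =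
          A * Real.exp (-3 * t) + B * Real.exp (-2 * t) + C * Real.exp (-t) +
          D * (Real.exp (-t) - Real.exp (-2 * t)) +
          E / 2 * (Real.exp (-t) - Real.exp (-3 * t)) +
          F * (Real.exp (-2 * t) - Real.exp (-3 * t)) +
          G * (Real.exp (-t) / 2 - Real.exp (-2 * t) + Real.exp (-3 * t) / 2) := by
  rintro ⟨A, B, C, D, E, F, G, hA, hB, hC, hD, hE, hF, hG, h⟩
  have hmem : A • loopKernel 3 0 0 + B • loopKernel 2 0 0 + C • loopKernel 1 0 0 +
      D • loopKernel 1 1 1 + (E / 2) • loopKernel 1 2 1 + F • loopKernel 2 1 1 +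
      (G / 2) • loopKernel 1 1 2 ∈ decayCone 3 := by
    repeat' apply add_mem
    all_goals
      exact PointedCone.smul_mem _ (by positivity)
        (loopKernel_mem_decayCone (by norm_num) (by norm_num))
  have hsum : (fun t ↦ ∑ i, ![3, -8, 6] i * exp (-![1, 2, 3] i * t)) ∈ decayCone 3 := by
    refine mem_decayCone_of_eqOn hmem fun t ht ↦ ?_
    simp only [Pi.add_apply, Pi.smul_apply, smul_eq_mul, loopKernel_exponent_zero,
      loopKernel_exponent_one, loopKernel_exponent_two, Fin.sum_univ_three, Matrix.cons_val]
    linear_combination (norm := ring_nf) -h t ht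
  have hnonneg := sum_sub_mul_nonneg_of_mem_decayCone hsum
  simp only [Fin.sum_univ_three, Matrix.cons_val] at hnonneg
  norm_num at hnonneg
end

section
/- Let N ≥ 1, let α_1,…,α_N > 0 be pairwise distinct, and let γ_1,…,γ_N ∈ ℝ. Then Σ_{j=1}^N γ_j e^{−α_j t} ≥ 0 for all t ≥ 0 if and only if Σ_{j=1}^N γ_j/(λ + α_j)^m ≥ 0 for every λ > 0 and every integer m ≥ 1. -/
open Finset

/-!
Write `K t = ∑ⱼ γⱼ e^{-αⱼ t}` and let `k` be its Laplace transform. Since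
`n! ∑ⱼ γⱼ / (λ + αⱼ)ⁿ⁺¹ = (-1)ⁿ k⁽ⁿ⁾(λ)` is the integral of `tⁿ e^{-λt} K t` over `(0, ∞)`,
nonnegativity of `K` passes to these sums. Conversely, `K` is recovered from them by Post's
inversion formula: evaluating at `λ = n / t` with exponent `n` and rescaling by `(n / t)ⁿ` turns
each fraction into `(1 + αⱼ t / n)⁻ⁿ`, which tends to `e^{-αⱼ t}`.
-/

open Filter MeasureTheory Set Topology
open scoped Nat

section Laplace

theorem integral_pow_mul_exp_neg_mul_Ioi_s13 (n : ℕ) {r : ℝ} (hr : 0 < r) :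
    ∫ t in Ioi (0 : ℝ), t ^ n * Real.exp (-(r * t)) = n ! / r ^ (n + 1) := by
  have h := Real.integral_rpow_mul_exp_neg_mul_Ioi n.cast_add_one_pos hr
  simp only [add_sub_cancel_right, Real.rpow_natCast] at h
  rw [h, Real.Gamma_nat_eq_factorial, ← Nat.cast_add_one, Real.rpow_natCast, one_div, inv_pow,
    inv_mul_eq_div]

theorem integrableOn_pow_mul_exp_neg_mul_Ioi_s13 (n : ℕ) {r : ℝ} (hr : 0 < r) :
    IntegrableOn (fun t : ℝ ↦ t ^ n * Real.exp (-(r * t))) (Ioi 0) := by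
  refine Integrable.of_integral_ne_zero ?_
  rw [integral_pow_mul_exp_neg_mul_Ioi_s13 n hr]
  positivity

theorem integral_pow_mul_exp_mul_sum_exp {ι : Type*} (s : Finset ι) (α γ : ι → ℝ) (n : ℕ)
    {lam : ℝ} (hlam : ∀ j ∈ s, 0 < lam + α j) :
    ∫ t in Ioi (0 : ℝ),
        t ^ n * Real.exp (-(lam * t)) * ∑ j ∈ s, γ j * Real.exp (-(α j) * t) =
      n ! * ∑ j ∈ s, γ j / (lam + α j) ^ (n + 1) := by
  have integrand_eq (t : ℝ) :
      t ^ n * Real.exp (-(lam * t)) * ∑ j ∈ s, γ j * Real.exp (-(α j) * t) =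
        ∑ j ∈ s, γ j * (t ^ n * Real.exp (-((lam + α j) * t))) := by
    rw [mul_sum]
    refine sum_congr rfl fun j _ ↦ ?_
    rw [show -((lam + α j) * t) = -(lam * t) + -(α j) * t by ring, Real.exp_add]
    ring
  simp_rw [integrand_eq]
  rw [integral_finsetSum _ fun j hj ↦
      (integrableOn_pow_mul_exp_neg_mul_Ioi_s13 n (hlam j hj)).const_mul (γ j), mul_sum]
  refine sum_congr rfl fun j hj ↦ ?_
  rw [integral_const_mul, integral_pow_mul_exp_neg_mul_Ioi_s13 n (hlam j hj), mul_div_left_comm]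

theorem sum_div_pow_nonneg_of_sum_exp_nonneg {ι : Type*} {s : Finset ι} {α γ : ι → ℝ}
    (hK : ∀ t : ℝ, 0 < t → 0 ≤ ∑ j ∈ s, γ j * Real.exp (-(α j) * t))
    {lam : ℝ} (hlam : ∀ j ∈ s, 0 < lam + α j) (n : ℕ) :
    0 ≤ ∑ j ∈ s, γ j / (lam + α j) ^ (n + 1) := by
  have weighted_nonneg : 0 ≤ ∫ t in Ioi (0 : ℝ),
      t ^ n * Real.exp (-(lam * t)) * ∑ j ∈ s, γ j * Real.exp (-(α j) * t) :=
    setIntegral_nonneg measurableSet_Ioi fun t (ht : 0 < t) ↦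
      mul_nonneg (by positivity) (hK t ht)
  rw [integral_pow_mul_exp_mul_sum_exp s α γ n hlam] at weighted_nonneg
  exact nonneg_of_mul_nonneg_right weighted_nonneg (by positivity)

end Laplace

section PostInversion

theorem tendsto_div_pow_div_div_add_pow_exp_neg (a : ℝ) {t : ℝ} (ht : t ≠ 0) :
    Tendsto (fun n : ℕ ↦ (n / t) ^ n / (n / t + a) ^ n) atTop (𝓝 (Real.exp (-a * t))) := by
  have h := (Real.tendsto_one_add_div_pow_exp (a * t)).inv₀ (Real.exp_ne_zero _)
  rw [← Real.exp_neg, ← neg_mul] at h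
  refine h.congr' ?_
  filter_upwards [eventually_ne_atTop 0] with n hn
  have hn' : (n : ℝ) ≠ 0 := Nat.cast_ne_zero.2 hn
  have factor : (n : ℝ) / t + a = n / t * (1 + a * t / n) := by field_simp
  rw [factor, mul_pow, div_mul_cancel_left₀ (pow_ne_zero n (div_ne_zero hn' ht))]

theorem tendsto_div_pow_mul_sum_div_pow {ι : Type*} (s : Finset ι) (α γ : ι → ℝ) {t : ℝ}
    (ht : t ≠ 0) :
    Tendsto (fun n : ℕ ↦ (n / t) ^ n * ∑ j ∈ s, γ j / (n / t + α j) ^ n) atTop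
      (𝓝 (∑ j ∈ s, γ j * Real.exp (-(α j) * t))) := by
  simp_rw [mul_sum, mul_div_left_comm]
  exact tendsto_finsetSum s fun j _ ↦
    (tendsto_div_pow_div_div_add_pow_exp_neg (α j) ht).const_mul (γ j)

theorem sum_exp_nonneg_of_eventually_sum_div_pow_nonneg {ι : Type*} {s : Finset ι}
    {α γ : ι → ℝ}
    (hk : ∀ᶠ lam : ℝ in atTop, ∀ m : ℕ, 1 ≤ m → 0 ≤ ∑ j ∈ s, γ j / (lam + α j) ^ m)
    {t : ℝ} (ht : 0 ≤ t) :
    0 ≤ ∑ j ∈ s, γ j * Real.exp (-(α j) * t) := by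
  have nonneg_of_pos : ∀ u ∈ Ioi (0 : ℝ), 0 ≤ ∑ j ∈ s, γ j * Real.exp (-(α j) * u) := by
    intro u (hu : 0 < u)
    have tendsto_div : Tendsto (fun n : ℕ ↦ (n : ℝ) / u) atTop atTop :=
      tendsto_natCast_atTop_atTop.atTop_div_const hu
    refine ge_of_tendsto (tendsto_div_pow_mul_sum_div_pow s α γ hu.ne') ?_
    filter_upwards [tendsto_div.eventually hk, eventually_ge_atTop 1] with n hn hn_one
    exact mul_nonneg (by positivity) (hn n hn_one)
  refine le_on_closure nonneg_of_pos continuousOn_const (by fun_prop) ?_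
  rwa [closure_Ioi]

end PostInversion

theorem stmt_13_general {ι : Type*} (s : Finset ι) (α γ : ι → ℝ) {a : ℝ}
    (hα : ∀ j ∈ s, -α j ≤ a) :
    (∀ t : ℝ, 0 ≤ t → 0 ≤ ∑ j ∈ s, γ j * Real.exp (-(α j) * t)) ↔
    (∀ lam : ℝ, a < lam → ∀ m : ℕ, 1 ≤ m → 0 ≤ ∑ j ∈ s, γ j / (lam + α j) ^ m) := by
  constructor
  · intro hK lam hlam m hm
    obtain ⟨n, rfl⟩ := Nat.exists_eq_add_of_le' hm
    have lam_add_pos : ∀ j ∈ s, 0 < lam + α j := fun j hj ↦ by linarith [hα j hj]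
    exact sum_div_pow_nonneg_of_sum_exp_nonneg (fun t ht ↦ hK t ht.le) lam_add_pos n
  · intro hk t ht
    exact sum_exp_nonneg_of_eventually_sum_div_pow_nonneg ((eventually_gt_atTop a).mono hk) ht

/-- **Positivity criterion via the Laplace transform.**  A linear combination of decaying
exponentials is nonnegative on `[0,∞)` iff all the derived quantities
`∑ⱼ γⱼ/(λ+αⱼ)^m` are nonnegative for `λ > 0`, `m ≥ 1`. -/
theorem stmt_13 (N : ℕ) (hN : 1 ≤ N) (α γ : ℕ → ℝ)
    (hα : ∀ j ∈ Finset.Icc 1 N, 0 < α j)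
    (hαd : ∀ i ∈ Finset.Icc 1 N, ∀ j ∈ Finset.Icc 1 N, i ≠ j → α i ≠ α j) :
    (∀ t : ℝ, 0 ≤ t → 0 ≤ ∑ j ∈ Finset.Icc 1 N, γ j * Real.exp (-(α j) * t)) ↔
    (∀ lam : ℝ, 0 < lam → ∀ m : ℕ, 1 ≤ m →
      0 ≤ ∑ j ∈ Finset.Icc 1 N, γ j / (lam + α j) ^ m) :=
  stmt_13_general (Finset.Icc 1 N) α γ fun j hj ↦ neg_nonpos.2 (hα j hj).le
end

section
/- Let N ≥ 1 and a, b ∈ ℝ, and let M be the (N+1)×(N+1) cyclic matrix with M_{0,0} = −a, M_{i,i} = −b for 1 ≤ i ≤ N, M_{i,i+1} = b for 0 ≤ i ≤ N−1, M_{N,0} = a, and all other entries zero. Then the characteristic polynomial of M is det(λ·I − M) = (λ + a)(λ + b)^N − a·b^N. -/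
/-!
If every arc of the weighted digraph of a matrix is a loop or an arc of one cycle `σ`, then `1` and
`σ` are the only permutations that follow arcs of the digraph: a permutation that follows `σ`
somewhere cannot stop following it, by injectivity. Hence the Leibniz expansion has just two terms.
In the characteristic polynomial the sign of a cycle through all the vertices cancels against the
signs of the entries of `X - A`, which leaves `∏ (X - Aᵢᵢ) - ∏ A_{i,σ(i)}`.
-/

section PermutationExpansion

open Equiv.Perm Matrix Polynomial

variable {n R : Type*} [CommRing R]

theorem eq_one_or_eq_of_isCycle_of_apply_eq_or [Finite n] {σ τ : Equiv.Perm n} (hσ : σ.IsCycle)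
    (h : ∀ i, τ i = i ∨ τ i = σ i) : τ = 1 ∨ τ = σ := by
  refine or_iff_not_imp_left.mpr fun hτ => ?_
  obtain ⟨x, hx⟩ : ∃ x, τ x ≠ x := by simpa [Equiv.ext_iff] using hτ
  have moved_of_moved : ∀ y, τ y ≠ y → τ (σ y) ≠ σ y := by
    intro y hy hfix
    rw [← (h y).resolve_left hy] at hfix
    exact hy (τ.injective hfix)
  have moved_pow : ∀ k : ℕ, τ ((σ ^ k) x) ≠ (σ ^ k) x := fun k => by
    induction k with
    | zero => exact hx
    | succ k ih => simpa only [pow_succ', mul_apply] using moved_of_moved _ ih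
  have hσx : σ x ≠ x := (h x).resolve_left hx ▸ hx
  ext y
  by_cases hy : σ y = y
  · simpa [hy] using h y
  · obtain ⟨k, rfl⟩ := hσ.exists_pow_eq hσx hy
    exact (h _).resolve_left (moved_pow k)

variable [Fintype n] [DecidableEq n] {σ : Equiv.Perm n} {A : Matrix n n R}

theorem det_eq_prod_diag_add_sign_mul_prod_of_isCycle (hσ : σ.IsCycle)
    (hA : ∀ i j, j ≠ i → j ≠ σ i → A i j = 0) :
    A.det = ∏ i, A i i + (sign σ : ℤ) * ∏ i, A i (σ i) := by
  have vanishing : ∀ τ : Equiv.Perm n, τ ≠ 1 ∧ τ ≠ σ →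
      ((sign τ : ℤ) : R) * ∏ i, A i (τ i) = 0 := by
    rintro τ ⟨hτ_one, hτσ⟩
    obtain ⟨i, hi, hiσ⟩ : ∃ i, τ i ≠ i ∧ τ i ≠ σ i := by
      by_contra! h
      exact (eq_one_or_eq_of_isCycle_of_apply_eq_or hσ fun i =>
        or_iff_not_imp_left.mpr (h i)).elim hτ_one hτσ
    rw [Finset.prod_eq_zero (Finset.mem_univ i) (hA i (τ i) hi hiσ), mul_zero]
  rw [← det_transpose, det_apply']
  simp only [transpose_apply]
  rw [Fintype.sum_eq_add 1 σ hσ.ne_one.symm vanishing]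
  simp

theorem charpoly_eq_prod_sub_prod_of_isCycle (hσ : σ.IsCycle) (hsupp : σ.support = Finset.univ)
    (hA : ∀ i j, j ≠ i → j ≠ σ i → A i j = 0) :
    A.charpoly = ∏ i, (X - C (A i i)) - ∏ i, C (A i (σ i)) := by
  have entry_cycle (i : n) : A.charmatrix i (σ i) = -C (A i (σ i)) :=
    charmatrix_apply_ne _ _ _ (mem_support.mp (hsupp ▸ Finset.mem_univ i)).symm
  have entry_zero (i j : n) (hij : j ≠ i) (hj : j ≠ σ i) : A.charmatrix i j = 0 := by
    rw [charmatrix_apply_ne _ _ _ hij.symm, hA i j hij hj, map_zero, neg_zero]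
  have signs_cancel (k : ℕ) : (-1 : R[X]) ^ k * (-1) ^ k = 1 := pow_mul_pow_eq_one k (by simp)
  rw [charpoly, det_eq_prod_diag_add_sign_mul_prod_of_isCycle hσ entry_zero, hσ.sign, hsupp]
  simp only [charmatrix_apply_eq, entry_cycle, Finset.prod_neg]
  push_cast
  linear_combination -(∏ i, C (A i (σ i))) * signs_cancel (Finset.univ : Finset n).card

end PermutationExpansion

open Polynomial in
theorem stmt_16_general {R : Type*} [CommRing R] (N : ℕ) (hN : 1 ≤ N) (a b : R)
    (M : Matrix (Fin (N + 1)) (Fin (N + 1)) R)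
    (hM : M = Matrix.of fun i j : Fin (N + 1) =>
      if (i : ℕ) = 0 ∧ (j : ℕ) = 0 then -a
      else if (i : ℕ) = (j : ℕ) then -b
      else if (j : ℕ) = (i : ℕ) + 1 then b
      else if (i : ℕ) = N ∧ (j : ℕ) = 0 then a
      else 0) :
    M.charpoly = (X + C a) * (X + C b) ^ N - C a * C b ^ N := by
  have entry_zero (i j : Fin (N + 1)) (hij : j ≠ i) (hj : j ≠ finRotate (N + 1) i) :
      M i j = 0 := by
    simp only [ne_eq, Fin.ext_iff, coe_finRotate, Fin.val_last] at hij hj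
    simp only [hM, Matrix.of_apply]
    split_ifs at hj ⊢ <;> first | rfl | omega
  have prod_diag : ∏ i, (X - C (M i i)) = (X + C a) * (X + C b) ^ N := by
    simp [Fin.prod_univ_succ, hM]
  have prod_cycle : ∏ i, C (M i (finRotate (N + 1) i)) = C a * C b ^ N := by
    simp [Fin.prod_univ_castSucc, hM, Nat.ne_of_gt hN, mul_comm]
  rw [charpoly_eq_prod_sub_prod_of_isCycle (isCycle_finRotate_of_le (by omega))
    (support_finRotate_of_le (by omega)) entry_zero, prod_diag, prod_cycle]

/-- **Characteristic polynomial of the single-loop generator.**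
`det(λI − M) = (λ+a)(λ+b)^N − a b^N`. -/
theorem stmt_16 (N : ℕ) (hN : 1 ≤ N) (a b : ℝ)
    (M : Matrix (Fin (N + 1)) (Fin (N + 1)) ℝ)
    (hM : M = Matrix.of fun i j : Fin (N + 1) =>
      if (i : ℕ) = 0 ∧ (j : ℕ) = 0 then -a
      else if (i : ℕ) = (j : ℕ) then -b
      else if (j : ℕ) = (i : ℕ) + 1 then b
      else if (i : ℕ) = N ∧ (j : ℕ) = 0 then a
      else 0) :
    ∀ lam : ℝ,
      (lam • (1 : Matrix (Fin (N + 1)) (Fin (N + 1)) ℝ) - M).det =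
        (lam + a) * (lam + b) ^ N - a * b ^ N := by
  intro lam
  simpa [Matrix.eval_charpoly, Matrix.smul_one_eq_diagonal] using
    congrArg (Polynomial.eval lam) (stmt_16_general N hN a b M hM)
end
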